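/- Let p > 1 and R > 0, and on the interval (0,R) set d(t) := min{t, R−t}. There exist constants b = b(p) ≥ 1 and c = c(p) > 0 such that, with D := bR, for every u ∈ C_c^∞((0,R)) and all x, y ∈ (0,R) with x ≠ y, one has |u(x) − u(y)| · X^{1/p}(|x−y|/D) ≤ c · |x−y|^{1−1/p} · ( ∫_0^R |u'(t)|^p dt − ((p−1)/p)^p ∫_0^R |u(t)|^p / (d(t))^p dt )^{1/p}. -/

import Mathlib

open MeasureTheory Metric Set

/-!
If `g ≥ 0` solves the Riccati inequality `g' + (p - 1) g ^ (p / (p - 1)) + V ≤ 0`, then Young's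
inequality bounds `(g |u| ^ p)'` by `|u'| ^ p - V |u| ^ p`. For the Hardy potential
`V t = ((p - 1) / p) ^ p / t ^ p` the field `((p - 1) / p) ^ (p - 1) t ^ (1 - p) (1 - κ / L)` with
`L t = 1 - log (t / m)` qualifies for every `κ ∈ [0, 1 / p]`. Using `κ = 0` to the left of a point
`x` and `κ = 1 / p` to its right shows that `|u x| ^ p` is at most a constant times
`x ^ (p - 1) L x` times the Hardy deficit of `u` on `(0, m)`. For `y ≥ 2 x` this bound at `x` and at
`y` already controls `u x - u y`; for `x ≤ y ≤ 2 x` it controls the potential term between `x` and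
`y`, hence `∫ |u'| ^ p` there, and Hölder's inequality concludes. For the distance to both endpoints
of `(0, R)` the deficit is the sum of the half-line deficits of `u` and of its reflection on
`(0, R / 2)`.
-/

section PowerInequalities

lemma abs_add_rpow_le {p : ℝ} (hp : 1 ≤ p) (a b : ℝ) :
    |a + b| ^ p ≤ 2 ^ (p - 1) * (|a| ^ p + |b| ^ p) :=
  calc |a + b| ^ p ≤ (|a| + |b|) ^ p := by
        gcongr
        exact abs_add_le a b
    _ ≤ _ := mod_cast NNReal.rpow_add_le_mul_rpow_add_rpow (Real.nnabs a) (Real.nnabs b) hp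

lemma abs_sub_rpow_le_min_add_max {p : ℝ} (hp : 1 ≤ p) (f : ℝ → ℝ) (x y c : ℝ) :
    |f x - f y| ^ p ≤ 2 ^ (p - 1) *
      (|f (min x c) - f (min y c)| ^ p + |f (max x c) - f (max y c)| ^ p) := by
  have h_diff : f x - f y = f (min x c) - f (min y c) + (f (max x c) - f (max y c)) := by
    linarith [fn_min_add_fn_max f x c, fn_min_add_fn_max f y c]
  rw [h_diff]
  exact abs_add_rpow_le hp _ _

lemma mul_abs_rpow_mul_le_young {p g : ℝ} (hp : 1 < p) (hg : 0 ≤ g) (a c : ℝ) :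
    g * (p * |a| ^ (p - 2) * a * c) ≤ |c| ^ p + (p - 1) * g ^ (p / (p - 1)) * |a| ^ p := by
  have hp1 : 0 < p - 1 := sub_pos.2 hp
  have h_abs : |(|a| ^ (p - 2) * a)| = |a| ^ (p - 1) := by
    rcases eq_or_ne a 0 with rfl | ha
    · simp [Real.zero_rpow hp1.ne']
    · rw [abs_mul, abs_of_nonneg (by positivity), ← Real.rpow_add_one (abs_pos.2 ha).ne']
      ring_nf
  have h_pow : |g * (|a| ^ (p - 2) * a)| ^ (p / (p - 1)) = g ^ (p / (p - 1)) * |a| ^ p := by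
    rw [abs_mul, abs_of_nonneg hg, h_abs, Real.mul_rpow hg (by positivity),
      ← Real.rpow_mul (abs_nonneg a), mul_div_cancel₀ p hp1.ne']
  have h_young := Real.young_inequality c (g * (|a| ^ (p - 2) * a)) (.conjExponent hp)
  rw [Real.conjExponent, h_pow] at h_young
  calc g * (p * |a| ^ (p - 2) * a * c) = p * (c * (g * (|a| ^ (p - 2) * a))) := by ring
    _ ≤ p * (|c| ^ p / p + g ^ (p / (p - 1)) * |a| ^ p / (p / (p - 1))) := by gcongr
    _ = |c| ^ p + (p - 1) * g ^ (p / (p - 1)) * |a| ^ p := by field_simp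

lemma one_sub_rpow_le {q z : ℝ} (hq : 1 ≤ q) (hz0 : 0 ≤ z) (hz1 : z ≤ 1) :
    (1 - z) ^ q ≤ 1 - q * z + (q * z) ^ 2 := by
  have h_sub : 0 ≤ 1 - z := sub_nonneg.2 hz1
  have h_mul : (1 - z) ^ q * (1 + q * z) ≤ 1 :=
    calc (1 - z) ^ q * (1 + q * z) ≤ (1 - z) ^ q * (1 + z) ^ q := by
          gcongr
          exact one_add_mul_self_le_rpow_one_add (by linarith) hq
      _ = ((1 - z) * (1 + z)) ^ q := (Real.mul_rpow h_sub (by positivity)).symm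
      _ ≤ 1 := Real.rpow_le_one (by positivity) (by nlinarith) (by positivity)
  refine le_of_mul_le_mul_right (h_mul.trans ?_) (by positivity : 0 < 1 + q * z)
  calc 1 ≤ 1 + (q * z) ^ 3 := le_add_of_nonneg_right (by positivity)
    _ = (1 - q * z + (q * z) ^ 2) * (1 + q * z) := by ring

lemma abs_intervalIntegral_rpow_le {p a b : ℝ} {f : ℝ → ℝ} (hp : 1 ≤ p) (hab : a ≤ b)
    (hf : IntervalIntegrable f volume a b)
    (hfp : IntervalIntegrable (fun t ↦ |f t| ^ p) volume a b) :
    |∫ t in a..b, f t| ^ p ≤ (b - a) ^ (p - 1) * ∫ t in a..b, |f t| ^ p := by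
  have hp0 : 0 < p := by positivity
  rcases hab.eq_or_lt with rfl | hab
  · simp [Real.zero_rpow hp0.ne']
  have h_len : 0 < b - a := sub_pos.2 hab
  have h_jensen : ((b - a)⁻¹ * ∫ t in a..b, |f t|) ^ p ≤ (b - a)⁻¹ * ∫ t in a..b, |f t| ^ p := by
    have h := (convexOn_rpow hp).map_set_average_le (μ := volume) (t := Ioc a b)
      (f := fun t ↦ |f t|) (continuousOn_id.rpow_const fun _ _ ↦ .inr hp0.le) isClosed_Ici
      (by simp [hab]) (by simp) (.of_forall fun t ↦ abs_nonneg (f t)) hf.1.abs hfp.1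
    simpa [setAverage_eq, intervalIntegral.integral_of_le hab.le, h_len.le] using h
  calc |∫ t in a..b, f t| ^ p ≤ (∫ t in a..b, |f t|) ^ p := by
        gcongr
        exact intervalIntegral.abs_integral_le_integral_abs hab.le
    _ = (b - a) ^ p * ((b - a)⁻¹ * ∫ t in a..b, |f t|) ^ p := by
        rw [← Real.mul_rpow h_len.le
          (mul_nonneg (by positivity) (intervalIntegral.integral_nonneg hab.le (by simp))),
          mul_inv_cancel_left₀ h_len.ne']
    _ ≤ (b - a) ^ p * ((b - a)⁻¹ * ∫ t in a..b, |f t| ^ p) := by gcongr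
    _ = (b - a) ^ (p - 1) * ∫ t in a..b, |f t| ^ p := by
        rw [← mul_assoc, Real.rpow_sub_one h_len.ne', div_eq_mul_inv]

lemma mul_inv_rpow_le_of_rpow_le {p A C J L r : ℝ} (hp : 0 < p) (hA : 0 ≤ A) (hC : 0 ≤ C)
    (hJ : 0 ≤ J) (hL : 0 < L) (hr : 0 ≤ r) (h : A ^ p ≤ C * (r ^ (p - 1) * L) * J) :
    A * L⁻¹ ^ (1 / p) ≤ C ^ (1 / p) * r ^ (1 - 1 / p) * J ^ (1 / p) := by
  have h_A : (A ^ p) ^ (1 / p) = A := by rw [one_div, Real.rpow_rpow_inv hA hp.ne']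
  have h_r : (r ^ (p - 1)) ^ (1 / p) = r ^ (1 - 1 / p) := by
    rw [← Real.rpow_mul hr]
    congr 1
    field_simp
  calc A * L⁻¹ ^ (1 / p) = (A ^ p * L⁻¹) ^ (1 / p) := by
        rw [Real.mul_rpow (by positivity) (by positivity), h_A]
    _ ≤ (C * r ^ (p - 1) * J) ^ (1 / p) := by
        refine Real.rpow_le_rpow (by positivity) ?_ (by positivity)
        rw [← div_eq_mul_inv, div_le_iff₀ hL]
        exact h.trans_eq (by ring)
    _ = C ^ (1 / p) * r ^ (1 - 1 / p) * J ^ (1 / p) := by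
        rw [Real.mul_rpow (by positivity) hJ, Real.mul_rpow hC (by positivity), h_r]

end PowerInequalities

section LogarithmicModulus

/-- The logarithmic weight `1 / X (t / m)`, where `X s = (1 - log s)⁻¹`. -/
noncomputable def logWeight (m t : ℝ) : ℝ := 1 - Real.log (t / m)

/-- The `p`-th power of the modulus of continuity `t ^ (1 - 1 / p) * X (t / m) ^ (-1 / p)` of the
Hardy–Morrey inequality, where `X s = (1 - log s)⁻¹`. -/
noncomputable def logModulus (p m t : ℝ) : ℝ := t ^ (p - 1) * logWeight m t

variable {p m R r s t : ℝ}

lemma one_le_logWeight (ht : 0 ≤ t) (htm : t ≤ m) : 1 ≤ logWeight m t := by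
  have hm : 0 ≤ m := ht.trans htm
  have := Real.log_nonpos (div_nonneg ht hm) (div_le_one_of_le₀ htm hm)
  unfold logWeight
  linarith

lemma logWeight_anti (hm : 0 < m) (hs : 0 < s) (hst : s ≤ t) : logWeight m t ≤ logWeight m s := by
  unfold logWeight
  gcongr

lemma hasDerivAt_logWeight (hm : m ≠ 0) (ht : t ≠ 0) : HasDerivAt (logWeight m) (-t⁻¹) t := by
  have h := (((hasDerivAt_id t).div_const m).log (div_ne_zero ht hm)).const_sub 1
  refine h.congr_deriv ?_
  simp only [id_eq]
  field_simp

lemma logModulus_nonneg (ht : 0 ≤ t) (htm : t ≤ m) : 0 ≤ logModulus p m t :=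
  mul_nonneg (by positivity) (zero_le_one.trans (one_le_logWeight ht htm))

lemma logModulus_le_of_le (hp : 1 < p) (hm : 0 < m) (hmR : m ≤ R) (ht : 0 ≤ t) :
    logModulus p m t ≤ logModulus p R t := by
  rcases ht.eq_or_lt with rfl | ht
  · simp [logModulus, Real.zero_rpow (sub_pos.2 hp).ne']
  · have hR : 0 < R := hm.trans_le hmR
    unfold logModulus logWeight
    gcongr

lemma logModulus_le_mul_logModulus (hp : 1 < p) (ht : 0 ≤ t) (htr : t ≤ r) (hrm : r ≤ m) :
    logModulus p m t ≤ p / (p - 1) * logModulus p m r := by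
  have hp1 : 0 < p - 1 := sub_pos.2 hp
  rcases ht.eq_or_lt with rfl | ht
  · have := logModulus_nonneg (p := p) htr hrm
    rw [logModulus, Real.zero_rpow hp1.ne', zero_mul]
    positivity
  have hr : 0 < r := ht.trans_le htr
  have hm : 0 < m := hr.trans_le hrm
  have h_one : 1 ≤ logWeight m r := one_le_logWeight hr.le hrm
  have h_split : logWeight m t = logWeight m r + Real.log (r / t) := by
    simp only [logWeight, Real.log_div, hr.ne', hm.ne', ht.ne', ne_eq, not_false_eq_true]
    ring
  have h_log : t ^ (p - 1) * Real.log (r / t) ≤ r ^ (p - 1) / (p - 1) :=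
    calc t ^ (p - 1) * Real.log (r / t) ≤ t ^ (p - 1) * ((r / t) ^ (p - 1) / (p - 1)) := by
          gcongr
          exact Real.log_le_rpow_div (by positivity) hp1
      _ = r ^ (p - 1) / (p - 1) := by
          rw [Real.div_rpow hr.le ht.le]
          field_simp
  calc logModulus p m t = t ^ (p - 1) * logWeight m r + t ^ (p - 1) * Real.log (r / t) := by
        rw [logModulus, h_split, mul_add]
    _ ≤ r ^ (p - 1) * logWeight m r + r ^ (p - 1) / (p - 1) * logWeight m r :=
        add_le_add (by gcongr) (h_log.trans (le_mul_of_one_le_right (by positivity) h_one))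
    _ = p / (p - 1) * logModulus p m r := by
        rw [logModulus]
        field_simp
        ring

lemma logModulus_le_mul_logModulus_of_le (hp : 1 < p) (hm : 0 < m) (hmR : m ≤ R) (ht : 0 ≤ t)
    (htr : t ≤ r) (hrR : r ≤ R) : logModulus p m t ≤ p / (p - 1) * logModulus p R r :=
  (logModulus_le_of_le hp hm hmR ht).trans (logModulus_le_mul_logModulus hp ht htr hrR)

lemma logModulus_le_two_rpow_mul (hp : 1 ≤ p) (hr : 0 < r) (hrt : r ≤ t) (htr : t ≤ 2 * r)
    (htm : t ≤ m) : logModulus p m t ≤ 2 ^ (p - 1) * logModulus p m r := by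
  have ht : 0 < t := hr.trans_le hrt
  calc logModulus p m t ≤ (2 * r) ^ (p - 1) * logWeight m r :=
        mul_le_mul (Real.rpow_le_rpow ht.le htr (sub_nonneg.2 hp))
          (logWeight_anti (ht.trans_le htm) hr hrt)
          (zero_le_one.trans (one_le_logWeight ht.le htm)) (by positivity)
    _ = 2 ^ (p - 1) * logModulus p m r := by
        rw [Real.mul_rpow zero_le_two hr.le, logModulus, mul_assoc]

end LogarithmicModulus

section HardyDeficit

/-- The integrand `|u'|ᵖ - ((p - 1) / p)ᵖ |u|ᵖ / dᵖ` of the Hardy deficit with respect to the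
distance function `d`. -/
noncomputable def hardyDensity (p : ℝ) (d u : ℝ → ℝ) (t : ℝ) : ℝ :=
  |deriv u t| ^ p - ((p - 1) / p) ^ p * (|u t| ^ p / d t ^ p)

/-- The Hardy deficit of `u` on the interval from `a` to `b`: the gap in Hardy's inequality with the
sharp constant and distance function `d`. -/
noncomputable def hardyDeficit (p : ℝ) (d u : ℝ → ℝ) (a b : ℝ) : ℝ :=
  ∫ t in a..b, hardyDensity p d u t

variable {p : ℝ} {d u : ℝ → ℝ}

lemma continuous_abs_deriv_rpow (hp : 0 ≤ p) (hu : ContDiff ℝ 1 u) :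
    Continuous fun t ↦ |deriv u t| ^ p :=
  (hu.continuous_deriv le_rfl).abs.rpow_const fun _ ↦ .inr hp

lemma continuous_abs_rpow_div_rpow (hp : 0 < p) (hd : Continuous d) (hu : Continuous u)
    (hpos : ∀ t ∈ tsupport u, 0 < d t) : Continuous fun t ↦ |u t| ^ p / d t ^ p := by
  refine continuous_of_tsupport fun t ht ↦ ?_
  have h_supp : Function.support (fun t ↦ |u t| ^ p / d t ^ p) ⊆ Function.support u := by
    intro t ht hut
    simp [hut, Real.zero_rpow hp.ne'] at ht
  have hdt : 0 < d t := hpos t (closure_mono h_supp ht)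
  exact (hu.abs.rpow_const fun _ ↦ .inr hp.le).continuousAt.div
    (hd.rpow_const fun _ ↦ .inr hp.le).continuousAt (by positivity)

lemma continuous_hardyDensity (hp : 0 < p) (hd : Continuous d) (hu : ContDiff ℝ 1 u)
    (hpos : ∀ t ∈ tsupport u, 0 < d t) : Continuous (hardyDensity p d u) :=
  (continuous_abs_deriv_rpow hp.le hu).sub
    ((continuous_abs_rpow_div_rpow hp hd hu.continuous hpos).const_mul _)

lemma hardyDeficit_add_adjacent (hp : 0 < p) (hd : Continuous d) (hu : ContDiff ℝ 1 u)
    (hpos : ∀ t ∈ tsupport u, 0 < d t) (a b c : ℝ) :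
    hardyDeficit p d u a b + hardyDeficit p d u b c = hardyDeficit p d u a c := by
  have h := continuous_hardyDensity hp hd hu hpos
  exact intervalIntegral.integral_add_adjacent_intervals (h.intervalIntegrable a b)
    (h.intervalIntegrable b c)

lemma hardyDeficit_eq_sub (hp : 0 < p) (hd : Continuous d) (hu : ContDiff ℝ 1 u)
    (hpos : ∀ t ∈ tsupport u, 0 < d t) (a b : ℝ) :
    hardyDeficit p d u a b =
      (∫ t in a..b, |deriv u t| ^ p) - ((p - 1) / p) ^ p * ∫ t in a..b, |u t| ^ p / d t ^ p := by
  have h_pot := continuous_abs_rpow_div_rpow hp hd hu.continuous hpos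
  rw [← intervalIntegral.integral_const_mul, ← intervalIntegral.integral_sub
    ((continuous_abs_deriv_rpow hp.le hu).intervalIntegrable a b)
    ((h_pot.const_mul _).intervalIntegrable a b)]
  rfl

lemma hardyDeficit_congr {a b : ℝ} {e v : ℝ → ℝ} (hab : a ≤ b)
    (h : ∀ t ∈ Icc a b, hardyDensity p d u t = hardyDensity p e v t) :
    hardyDeficit p d u a b = hardyDeficit p e v a b :=
  intervalIntegral.integral_congr fun t ht ↦ h t (uIcc_of_le hab ▸ ht)

lemma hardyDeficit_comp_const_sub (p R a b : ℝ) (d u : ℝ → ℝ) :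
    hardyDeficit p (fun t ↦ d (R - t)) (fun t ↦ u (R - t)) a b =
      hardyDeficit p d u (R - b) (R - a) := by
  simp only [hardyDeficit, hardyDensity, deriv_comp_const_sub, abs_neg]
  exact intervalIntegral.integral_comp_sub_left (hardyDensity p d u) R

lemma hardyDeficit_min_eq_add {R : ℝ} (hp : 0 < p) (hR : 0 ≤ R) (hu : ContDiff ℝ 1 u)
    (hs : tsupport u ⊆ Ioo 0 R) :
    hardyDeficit p (fun t ↦ min t (R - t)) u 0 R =
      hardyDeficit p id u 0 (R / 2) + hardyDeficit p id (fun t ↦ u (R - t)) 0 (R / 2) := by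
  have hpos : ∀ t ∈ tsupport u, 0 < min t (R - t) := fun t ht ↦
    lt_min (hs ht).1 (sub_pos.2 (hs ht).2)
  rw [← hardyDeficit_add_adjacent hp (by fun_prop) hu hpos 0 (R / 2) R]
  congr 1
  · refine hardyDeficit_congr (by positivity) fun t ht ↦ ?_
    rw [hardyDensity, hardyDensity, min_eq_left (by linarith [ht.2]), id_eq]
  · have h := hardyDeficit_comp_const_sub p R 0 (R / 2) (fun t ↦ min t (R - t)) u
    rw [sub_zero, sub_half] at h
    rw [← h]
    refine hardyDeficit_congr (by positivity) fun t ht ↦ ?_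
    rw [hardyDensity, hardyDensity, sub_sub_cancel, min_eq_right (by linarith [ht.2]), id_eq]

end HardyDeficit

section RiccatiField

lemma sub_le_integral_of_riccati {p a b : ℝ} {u g g' V : ℝ → ℝ} (hp : 1 < p) (hab : a ≤ b)
    (hu : ∀ t ∈ Ioo a b, DifferentiableAt ℝ u t)
    (hg : ∀ t ∈ Ioo a b, HasDerivAt g (g' t) t)
    (hcont : ContinuousOn (fun t ↦ g t * |u t| ^ p) (Icc a b))
    (hg_nonneg : ∀ t ∈ Ioo a b, 0 ≤ g t)
    (hriccati : ∀ t ∈ Ioo a b, g' t + (p - 1) * g t ^ (p / (p - 1)) + V t ≤ 0)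
    (hint : IntegrableOn (fun t ↦ |deriv u t| ^ p - V t * |u t| ^ p) (Icc a b)) :
    g b * |u b| ^ p - g a * |u a| ^ p ≤ ∫ t in a..b, (|deriv u t| ^ p - V t * |u t| ^ p) := by
  refine intervalIntegral.sub_le_integral_of_hasDeriv_right_of_le hab hcont (fun t ht ↦
    ((hg t ht).mul ((hasDerivAt_abs_rpow (u t) hp).comp t (hu t ht).hasDerivAt)).hasDerivWithinAt)
    hint fun t ht ↦ ?_
  have h_young := mul_abs_rpow_mul_le_young hp (hg_nonneg t ht) (u t) (deriv u t)
  have h_riccati := mul_nonpos_of_nonpos_of_nonneg (hriccati t ht)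
    (by positivity : 0 ≤ |u t| ^ p)
  simp only [Function.comp_apply]
  linarith

/-- The field `t ^ (1 - p) * ((p - 1) / p) ^ (p - 1) * (1 - κ / L t)` with `L` the logarithmic
weight. It solves the Riccati inequality of Hardy's potential `((p - 1) / p) ^ p / t ^ p`; the
parameter `κ = 0` gives the sharp Hardy inequality and `κ = 1 / p` its logarithmic refinement. -/
noncomputable def hardyField (p κ m t : ℝ) : ℝ :=
  t ^ (1 - p) * (((p - 1) / p) ^ (p - 1) * (1 - κ / logWeight m t))

variable {p κ m t a b : ℝ} {u : ℝ → ℝ}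

lemma hasDerivAt_hardyField (ht : 0 < t) (htm : t ≤ m) :
    HasDerivAt (hardyField p κ m)
      (t ^ (-p) * (((p - 1) / p) ^ (p - 1) *
        ((1 - p) * (1 - κ / logWeight m t) - κ / logWeight m t ^ 2))) t := by
  have hL : logWeight m t ≠ 0 := (zero_lt_one.trans_le (one_le_logWeight ht.le htm)).ne'
  have h_pow : HasDerivAt (fun t : ℝ ↦ t ^ (1 - p)) ((1 - p) * t ^ (1 - p - 1)) t :=
    Real.hasDerivAt_rpow_const (.inl ht.ne')
  have h_log := (((hasDerivAt_const t κ).div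
    (hasDerivAt_logWeight (ht.trans_le htm).ne' ht.ne') hL).const_sub 1).const_mul
      (((p - 1) / p) ^ (p - 1))
  refine (h_pow.mul h_log).congr_deriv ?_
  have h_exp : t ^ (1 - p) = t ^ (-p) * t := by
    rw [← Real.rpow_add_one ht.ne', neg_add_eq_sub]
  simp only [Pi.div_apply]
  rw [h_exp, show 1 - p - 1 = -p by ring]
  field_simp
  ring

lemma div_logWeight_le_one (hp : 1 < p) (hκ : κ ≤ 1 / p) (ht : 0 ≤ t) (htm : t ≤ m) :
    κ / logWeight m t ≤ 1 := by
  have hL := one_le_logWeight ht htm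
  have hp_inv : 1 / p ≤ 1 := div_le_one_of_le₀ hp.le (by positivity)
  exact div_le_one_of_le₀ (by linarith) (by linarith)

lemma hardyField_nonneg (hp : 1 < p) (hκ : κ ≤ 1 / p) (ht : 0 ≤ t) (htm : t ≤ m) :
    0 ≤ hardyField p κ m t := by
  have := sub_nonneg.2 (div_logWeight_le_one hp hκ ht htm)
  unfold hardyField
  positivity

lemma sub_one_div_rpow_self_eq_mul (hp : 1 < p) :
    ((p - 1) / p) ^ p = ((p - 1) / p) ^ (p - 1) * ((p - 1) / p) := by
  rw [← Real.rpow_add_one (by positivity), sub_add_cancel]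

-- Divide by `((p - 1) / p) ^ (p - 1)` and expand `(1 - κ / L) ^ (p / (p - 1))` to second order: the
-- constant and linear terms cancel, and `(p * κ ^ 2 - κ) / L ^ 2 ≤ 0` is left.
lemma riccati_coefficient_nonpos {L : ℝ} (hp : 1 < p) (hκ0 : 0 ≤ κ) (hκ : κ ≤ 1 / p)
    (hL : 0 < L) (hκL : κ / L ≤ 1) :
    ((p - 1) / p) ^ (p - 1) * ((1 - p) * (1 - κ / L) - κ / L ^ 2)
      + (p - 1) * (((p - 1) / p) ^ (p - 1) * (1 - κ / L)) ^ (p / (p - 1))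
      + ((p - 1) / p) ^ p ≤ 0 := by
  have hp1 : 0 < p - 1 := sub_pos.2 hp
  have hκp : κ * p ≤ 1 := by rwa [le_div_iff₀ (by positivity)] at hκ
  have h_taylor : (1 - κ / L) ^ (p / (p - 1)) ≤
      1 - p / (p - 1) * (κ / L) + (p / (p - 1) * (κ / L)) ^ 2 :=
    one_sub_rpow_le ((one_le_div hp1).2 (by linarith)) (by positivity) hκL
  have h_conj : (((p - 1) / p) ^ (p - 1) * (1 - κ / L)) ^ (p / (p - 1)) =
      ((p - 1) / p) ^ (p - 1) * ((p - 1) / p) * (1 - κ / L) ^ (p / (p - 1)) := by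
    rw [Real.mul_rpow (by positivity) (sub_nonneg.2 hκL), ← Real.rpow_mul (by positivity),
      mul_div_cancel₀ p hp1.ne', sub_one_div_rpow_self_eq_mul hp]
  rw [h_conj, sub_one_div_rpow_self_eq_mul hp]
  set H := ((p - 1) / p) ^ (p - 1)
  have hH : 0 < H := by positivity
  calc H * ((1 - p) * (1 - κ / L) - κ / L ^ 2)
        + (p - 1) * (H * ((p - 1) / p) * (1 - κ / L) ^ (p / (p - 1))) + H * ((p - 1) / p)
      ≤ H * ((1 - p) * (1 - κ / L) - κ / L ^ 2)
        + (p - 1) * (H * ((p - 1) / p) *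
          (1 - p / (p - 1) * (κ / L) + (p / (p - 1) * (κ / L)) ^ 2)) + H * ((p - 1) / p) := by
        gcongr
    _ = H * (κ / L ^ 2) * (κ * p - 1) := by
        field_simp
        ring
    _ ≤ 0 := mul_nonpos_of_nonneg_of_nonpos (by positivity) (by linarith)

lemma hardyField_riccati (hp : 1 < p) (hκ0 : 0 ≤ κ) (hκ : κ ≤ 1 / p) (ht : 0 < t) (htm : t ≤ m) :
    t ^ (-p) * (((p - 1) / p) ^ (p - 1) *
        ((1 - p) * (1 - κ / logWeight m t) - κ / logWeight m t ^ 2))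
      + (p - 1) * hardyField p κ m t ^ (p / (p - 1)) + ((p - 1) / p) ^ p / t ^ p ≤ 0 := by
  have hp1 : 0 < p - 1 := sub_pos.2 hp
  have hL := one_le_logWeight ht.le htm
  have hκL := div_logWeight_le_one hp hκ ht.le htm
  have h_pow : hardyField p κ m t ^ (p / (p - 1)) =
      t ^ (-p) * (((p - 1) / p) ^ (p - 1) * (1 - κ / logWeight m t)) ^ (p / (p - 1)) := by
    have h_exp : (1 - p) * (p / (p - 1)) = -p := by
      field_simp
      ring
    have := sub_nonneg.2 hκL
    rw [hardyField, Real.mul_rpow (by positivity) (by positivity), ← Real.rpow_mul ht.le, h_exp]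
  have h_coeff := riccati_coefficient_nonpos hp hκ0 hκ (by linarith) hκL
  rw [h_pow, div_eq_mul_inv _ (t ^ p), ← Real.rpow_neg ht.le]
  have h_scaled := mul_nonpos_of_nonneg_of_nonpos (by positivity : 0 ≤ t ^ (-p)) h_coeff
  linarith

lemma continuousOn_hardyField_mul (hp : 0 < p) (hu : Continuous u) (hs : tsupport u ⊆ Ioi 0) :
    ContinuousOn (fun t ↦ hardyField p κ m t * |u t| ^ p) (Iic m) := by
  refine fun t htm ↦ ContinuousAt.continuousWithinAt ?_
  by_cases ht : t ∈ tsupport u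
  · exact (hasDerivAt_hardyField (hs ht) htm).continuousAt.mul
      (hu.abs.rpow_const fun _ ↦ .inr hp.le).continuousAt
  · have h_zero : (fun _ ↦ 0) =ᶠ[nhds t] fun t ↦ hardyField p κ m t * |u t| ^ p := by
      filter_upwards [notMem_tsupport_iff_eventuallyEq.1 ht] with z hz
      simp [hz, Real.zero_rpow hp.ne']
    exact continuousAt_const.congr h_zero

lemma hardyField_mul_sub_le_hardyDeficit (hp : 1 < p) (hκ0 : 0 ≤ κ) (hκ : κ ≤ 1 / p)
    (hu : ContDiff ℝ 1 u) (hs : tsupport u ⊆ Ioi 0) (ha : 0 ≤ a) (hab : a ≤ b) (hbm : b ≤ m) :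
    hardyField p κ m b * |u b| ^ p - hardyField p κ m a * |u a| ^ p ≤
      hardyDeficit p id u a b := by
  have hp0 : 0 < p := zero_lt_one.trans hp
  have h_density : (fun t ↦ |deriv u t| ^ p - ((p - 1) / p) ^ p / t ^ p * |u t| ^ p) =
      hardyDensity p id u := by
    funext t
    simp only [hardyDensity, id_eq]
    ring
  have h_mem : ∀ t ∈ Ioo a b, 0 < t ∧ t ≤ m := fun t ht ↦
    ⟨ha.trans_lt ht.1, ht.2.le.trans hbm⟩
  rw [hardyDeficit, ← h_density]
  refine sub_le_integral_of_riccati hp hab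
    (fun t _ ↦ hu.differentiable one_ne_zero t)
    (fun t ht ↦ hasDerivAt_hardyField (h_mem t ht).1 (h_mem t ht).2)
    ((continuousOn_hardyField_mul hp0 hu.continuous hs).mono fun t ht ↦ ht.2.trans hbm)
    (fun t ht ↦ hardyField_nonneg hp hκ (h_mem t ht).1.le (h_mem t ht).2)
    (fun t ht ↦ hardyField_riccati hp hκ0 hκ (h_mem t ht).1 (h_mem t ht).2) ?_
  rw [h_density]
  exact (continuous_hardyDensity hp0 continuous_id hu fun t ht ↦ hs ht).integrableOn_Icc

end RiccatiField

section HalfLine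

variable {p m x y : ℝ} {u : ℝ → ℝ}

lemma hardyField_mul_abs_rpow_le (hp : 1 < p) (hu : ContDiff ℝ 1 u) (hs : tsupport u ⊆ Ioi 0)
    (hx : 0 ≤ x) : hardyField p 0 m x * |u x| ^ p ≤ hardyDeficit p id u 0 x := by
  have h := hardyField_mul_sub_le_hardyDeficit hp le_rfl (by positivity) hu hs le_rfl hx le_rfl
  have hu0 : u 0 = 0 := image_eq_zero_of_notMem_tsupport fun h ↦ lt_irrefl (0 : ℝ) (hs h)
  simpa [hu0, hardyField, Real.zero_rpow (zero_lt_one.trans hp).ne'] using h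

lemma hardyDeficit_nonneg (hp : 1 < p) (hu : ContDiff ℝ 1 u) (hs : tsupport u ⊆ Ioi 0)
    (hx : 0 ≤ x) : 0 ≤ hardyDeficit p id u 0 x :=
  (mul_nonneg (hardyField_nonneg hp (by positivity) hx le_rfl) (by positivity)).trans
    (hardyField_mul_abs_rpow_le (m := x) hp hu hs hx)

-- Add the inequality for `κ = 0` on `[0, x]` to the one for `κ = 1 / p` on `[x, m]`: the two fields
-- differ at `x` by the factor `1 / (p * logWeight m x)`.
lemma hardyField_mul_abs_rpow_le_logWeight (hp : 1 < p) (hu : ContDiff ℝ 1 u)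
    (hs : tsupport u ⊆ Ioi 0) (hx : 0 ≤ x) (hxm : x ≤ m) :
    hardyField p 0 m x * |u x| ^ p ≤ p * logWeight m x * hardyDeficit p id u 0 m := by
  have hL := one_le_logWeight hx hxm
  have h_left : hardyField p 0 m x * |u x| ^ p ≤ hardyDeficit p id u 0 x :=
    hardyField_mul_abs_rpow_le hp hu hs hx
  have h_right := hardyField_mul_sub_le_hardyDeficit hp (by positivity) le_rfl hu hs hx hxm le_rfl
  have h_end : 0 ≤ hardyField p (1 / p) m m * |u m| ^ p :=
    mul_nonneg (hardyField_nonneg hp le_rfl (hx.trans hxm) le_rfl) (by positivity)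
  have h_add := hardyDeficit_add_adjacent (zero_lt_one.trans hp) continuous_id hu
    (fun t ht ↦ hs ht) 0 x m
  have h_diff : hardyField p 0 m x - hardyField p (1 / p) m x =
      hardyField p 0 m x / (p * logWeight m x) := by
    unfold hardyField
    field_simp
    ring
  calc hardyField p 0 m x * |u x| ^ p
      = p * logWeight m x * ((hardyField p 0 m x - hardyField p (1 / p) m x) * |u x| ^ p) := by
        rw [h_diff]
        field_simp
    _ ≤ p * logWeight m x * hardyDeficit p id u 0 m := by
        gcongr
        linarith

lemma abs_rpow_le_logModulus_mul_hardyDeficit (hp : 1 < p) (hu : ContDiff ℝ 1 u)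
    (hs : tsupport u ⊆ Ioi 0) (hx : 0 < x) (hxm : x ≤ m) :
    |u x| ^ p ≤
      p / ((p - 1) / p) ^ (p - 1) * logModulus p m x * hardyDeficit p id u 0 m := by
  have h := hardyField_mul_abs_rpow_le_logWeight hp hu hs hx.le hxm
  have h_field : hardyField p 0 m x = ((p - 1) / p) ^ (p - 1) / x ^ (p - 1) := by
    rw [hardyField, ← neg_sub, Real.rpow_neg hx.le]
    simp only [zero_div, sub_zero, mul_one]
    ring
  rw [h_field, div_mul_eq_mul_div, div_le_iff₀ (by positivity)] at h
  refine (le_div_iff₀' (by positivity : 0 < ((p - 1) / p) ^ (p - 1))).2 h |>.trans_eq ?_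
  rw [logModulus]
  ring

lemma hardyDeficit_le_mul_hardyDeficit (hp : 1 < p) (hu : ContDiff ℝ 1 u)
    (hs : tsupport u ⊆ Ioi 0) (hx : 0 ≤ x) (hy : 0 ≤ y) (hym : y ≤ m) :
    hardyDeficit p id u x y ≤ (1 + p * logWeight m y) * hardyDeficit p id u 0 m := by
  have h_add := hardyDeficit_add_adjacent (zero_lt_one.trans hp) continuous_id hu
    fun t ht ↦ hs ht
  have h_left : 0 ≤ hardyDeficit p id u 0 x := hardyDeficit_nonneg hp hu hs hx
  have h_right :=
    hardyField_mul_sub_le_hardyDeficit hp le_rfl (by positivity) hu hs hy hym le_rfl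
  have h_end : 0 ≤ hardyField p 0 m m * |u m| ^ p :=
    mul_nonneg (hardyField_nonneg hp (by positivity) (hy.trans hym) le_rfl) (by positivity)
  have h_point := hardyField_mul_abs_rpow_le_logWeight hp hu hs hy hym
  linarith [h_add 0 x y, h_add 0 y m]

lemma integral_abs_rpow_div_rpow_le (hp : 1 < p) (hu : ContDiff ℝ 1 u) (hs : tsupport u ⊆ Ioi 0)
    (hx : 0 < x) (hxy : x ≤ y) (hyx : y ≤ 2 * x) (hym : y ≤ m) :
    ∫ t in x..y, |u t| ^ p / t ^ p ≤
      p / ((p - 1) / p) ^ (p - 1) * logWeight m x * hardyDeficit p id u 0 m := by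
  have hm : 0 < m := by linarith
  have hJ := hardyDeficit_nonneg hp hu hs hm.le
  have hL := one_le_logWeight hx.le (hxy.trans hym)
  set K := p / ((p - 1) / p) ^ (p - 1)
  have hK : 0 < K := by positivity
  have h_point : ∀ t ∈ Icc x y,
      |u t| ^ p / t ^ p ≤ K * logWeight m x * hardyDeficit p id u 0 m / x := by
    intro t ht
    have ht0 : 0 < t := hx.trans_le ht.1
    calc |u t| ^ p / t ^ p
        ≤ K * logModulus p m t * hardyDeficit p id u 0 m / t ^ p := by
          gcongr
          exact abs_rpow_le_logModulus_mul_hardyDeficit hp hu hs ht0 (ht.2.trans hym)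
      _ = K * logWeight m t * hardyDeficit p id u 0 m / t := by
          rw [logModulus, Real.rpow_sub_one ht0.ne']
          field_simp
      _ ≤ K * logWeight m x * hardyDeficit p id u 0 m / x := by
          have := logWeight_anti hm hx ht.1
          gcongr
          exact ht.1
  have h_cont : Continuous fun t ↦ |u t| ^ p / t ^ p :=
    continuous_abs_rpow_div_rpow (zero_lt_one.trans hp) continuous_id hu.continuous
      fun t ht ↦ hs ht
  calc ∫ t in x..y, |u t| ^ p / t ^ p
      ≤ ∫ _ in x..y, K * logWeight m x * hardyDeficit p id u 0 m / x :=
        intervalIntegral.integral_mono_on hxy (h_cont.intervalIntegrable x y) (by simp) h_point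
    _ = (y - x) / x * (K * logWeight m x * hardyDeficit p id u 0 m) := by
        rw [intervalIntegral.integral_const, smul_eq_mul]
        ring
    _ ≤ K * logWeight m x * hardyDeficit p id u 0 m :=
        mul_le_of_le_one_left (by positivity) ((div_le_one hx).2 (by linarith))

lemma integral_abs_deriv_rpow_le (hp : 1 < p) (hu : ContDiff ℝ 1 u) (hs : tsupport u ⊆ Ioi 0)
    (hx : 0 < x) (hxy : x ≤ y) (hyx : y ≤ 2 * x) (hym : y ≤ m) :
    ∫ t in x..y, |deriv u t| ^ p ≤ 2 * p * logWeight m x * hardyDeficit p id u 0 m := by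
  have hy : 0 < y := hx.trans_le hxy
  have hm : 0 < m := hy.trans_le hym
  have hJ := hardyDeficit_nonneg hp hu hs hm.le
  have hLx := one_le_logWeight hx.le (hxy.trans hym)
  have hLyx := logWeight_anti hm hx hxy
  have h_split : ∫ t in x..y, |deriv u t| ^ p =
      hardyDeficit p id u x y + ((p - 1) / p) ^ p * ∫ t in x..y, |u t| ^ p / t ^ p := by
    rw [hardyDeficit_eq_sub (zero_lt_one.trans hp) continuous_id hu fun t ht ↦ hs ht]
    simp only [id_eq, sub_add_cancel]
  set L := logWeight m x
  set J := hardyDeficit p id u 0 m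
  calc ∫ t in x..y, |deriv u t| ^ p
      ≤ (1 + p * logWeight m y) * J +
          ((p - 1) / p) ^ p * (p / ((p - 1) / p) ^ (p - 1) * L * J) := by
        rw [h_split]
        gcongr
        · exact hardyDeficit_le_mul_hardyDeficit hp hu hs hx.le hy.le hym
        · exact integral_abs_rpow_div_rpow_le hp hu hs hx hxy hyx hym
    _ = (1 + p * logWeight m y) * J + (p - 1) * L * J := by
        rw [sub_one_div_rpow_self_eq_mul hp]
        have hH : 0 < ((p - 1) / p) ^ (p - 1) := by positivity
        field_simp
    _ ≤ (L + p * L) * J + (p - 1) * L * J := by gcongr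
    _ = 2 * p * L * J := by ring

lemma abs_sub_rpow_le_of_le_two_mul (hp : 1 < p) (hu : ContDiff ℝ 1 u)
    (hs : tsupport u ⊆ Ioi 0) (hx : 0 < x) (hxy : x < y) (hyx : y ≤ 2 * x) (hym : y ≤ m) :
    |u x - u y| ^ p ≤ 2 * p * logModulus p m (y - x) * hardyDeficit p id u 0 m := by
  have hm : 0 < m := by linarith
  have h_len : 0 < y - x := sub_pos.2 hxy
  have hJ := hardyDeficit_nonneg hp hu hs hm.le
  have h_deriv := hu.continuous_deriv le_rfl
  calc |u x - u y| ^ p = |∫ t in x..y, deriv u t| ^ p := by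
        rw [intervalIntegral.integral_deriv_eq_sub (fun t _ ↦ hu.differentiable one_ne_zero t)
          (h_deriv.intervalIntegrable x y), abs_sub_comm]
    _ ≤ (y - x) ^ (p - 1) * ∫ t in x..y, |deriv u t| ^ p :=
        abs_intervalIntegral_rpow_le hp.le hxy.le (h_deriv.intervalIntegrable x y)
          ((continuous_abs_deriv_rpow (by positivity) hu).intervalIntegrable x y)
    _ ≤ (y - x) ^ (p - 1) * (2 * p * logWeight m x * hardyDeficit p id u 0 m) := by
        gcongr
        exact integral_abs_deriv_rpow_le hp hu hs hx hxy.le hyx hym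
    _ ≤ (y - x) ^ (p - 1) * (2 * p * logWeight m (y - x) * hardyDeficit p id u 0 m) := by
        have := logWeight_anti hm h_len (by linarith : y - x ≤ x)
        gcongr
    _ = 2 * p * logModulus p m (y - x) * hardyDeficit p id u 0 m := by
        rw [logModulus]
        ring

lemma abs_sub_rpow_le_of_two_mul_le (hp : 1 < p) (hu : ContDiff ℝ 1 u)
    (hs : tsupport u ⊆ Ioi 0) (hx : 0 < x) (hxy : 2 * x ≤ y) (hym : y ≤ m) :
    |u x - u y| ^ p ≤
      2 ^ (p - 1) * (p / ((p - 1) / p) ^ (p - 1)) * (p / (p - 1) + 2 ^ (p - 1)) *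
        logModulus p m (y - x) * hardyDeficit p id u 0 m := by
  have hJ := hardyDeficit_nonneg hp hu hs (by linarith : 0 ≤ m)
  have hΨx : logModulus p m x ≤ p / (p - 1) * logModulus p m (y - x) :=
    logModulus_le_mul_logModulus hp hx.le (by linarith) (by linarith)
  have hΨy : logModulus p m y ≤ 2 ^ (p - 1) * logModulus p m (y - x) :=
    logModulus_le_two_rpow_mul hp.le (by linarith) (by linarith) (by linarith) hym
  have hux := abs_rpow_le_logModulus_mul_hardyDeficit hp hu hs hx (by linarith : x ≤ m)
  have huy := abs_rpow_le_logModulus_mul_hardyDeficit hp hu hs (by linarith : 0 < y) hym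
  set K := p / ((p - 1) / p) ^ (p - 1)
  set Ψ := logModulus p m (y - x)
  set J := hardyDeficit p id u 0 m
  calc |u x - u y| ^ p ≤ 2 ^ (p - 1) * (|u x| ^ p + |u y| ^ p) := by
        simpa only [← sub_eq_add_neg, abs_neg] using abs_add_rpow_le hp.le (u x) (-u y)
    _ ≤ 2 ^ (p - 1) * (K * (p / (p - 1) * Ψ) * J + K * (2 ^ (p - 1) * Ψ) * J) := by
        gcongr
        · exact hux.trans (by gcongr)
        · exact huy.trans (by gcongr)
    _ = 2 ^ (p - 1) * K * (p / (p - 1) + 2 ^ (p - 1)) * Ψ * J := by ring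

/-- A constant, not sharp, for which the `p`-th power form of the Hardy–Morrey inequality holds on
initial intervals of the half-line. Its two entries belong to the cases `y ≤ 2 * x` and
`2 * x ≤ y`. -/
noncomputable def hardyMorreyConst (p : ℝ) : ℝ :=
  max (2 * p)
    (2 ^ (p - 1) * (p / ((p - 1) / p) ^ (p - 1)) * (p / (p - 1) + 2 ^ (p - 1)))

lemma hardyMorreyConst_pos (hp : 0 < p) : 0 < hardyMorreyConst p :=
  lt_max_of_lt_left (by positivity)

lemma abs_sub_rpow_le_hardyMorreyConst_mul (hp : 1 < p) (hu : ContDiff ℝ 1 u)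
    (hs : tsupport u ⊆ Ioi 0) (hx : 0 < x) (hxy : x ≤ y) (hym : y ≤ m) :
    |u x - u y| ^ p ≤
      hardyMorreyConst p * logModulus p m (y - x) * hardyDeficit p id u 0 m := by
  have hJ := hardyDeficit_nonneg hp hu hs (by linarith : 0 ≤ m)
  have hΨ : 0 ≤ logModulus p m (y - x) := logModulus_nonneg (by linarith) (by linarith)
  rcases hxy.eq_or_lt with rfl | hxy
  · have := hardyMorreyConst_pos (zero_lt_one.trans hp)
    rw [sub_self, abs_zero, Real.zero_rpow (by positivity)]
    positivity
  rcases le_total y (2 * x) with h_near | h_far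
  · refine (abs_sub_rpow_le_of_le_two_mul hp hu hs hx hxy h_near hym).trans ?_
    gcongr
    exact le_max_left _ _
  · refine (abs_sub_rpow_le_of_two_mul_le hp hu hs hx h_far hym).trans ?_
    gcongr
    exact le_max_right _ _

end HalfLine

section Interval

variable {p R x y : ℝ} {u : ℝ → ℝ}

lemma tsupport_comp_const_sub_subset (h : tsupport u ⊆ Iio R) :
    tsupport (fun t ↦ u (R - t)) ⊆ Ioi 0 := fun t ht ↦ by
  have ht' : R - t ∈ tsupport u :=
    tsupport_comp_subset_preimage u (f := fun t ↦ R - t) (by fun_prop) ht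
  exact (sub_lt_self_iff R).1 (h ht')

-- Clamping `x` and `y` to `(0, R / 2]` and to `[R / 2, R)` splits `u x - u y` into one increment on
-- each half of the interval.
lemma abs_sub_rpow_le_hardyDeficit_min (hp : 1 < p) (hu : ContDiff ℝ 1 u)
    (hs : tsupport u ⊆ Ioo 0 R) (hx : 0 < x) (hxy : x ≤ y) (hyR : y < R) :
    |u x - u y| ^ p ≤
      2 ^ (p - 1) * hardyMorreyConst p * (p / (p - 1)) * logModulus p R (y - x) *
        hardyDeficit p (fun t ↦ min t (R - t)) u 0 R := by
  have hR : 0 < R := by linarith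
  have hv : ContDiff ℝ 1 fun t ↦ u (R - t) := hu.comp (contDiff_const.sub contDiff_id)
  have hus : tsupport u ⊆ Ioi 0 := fun t ht ↦ (hs ht).1
  have hvs : tsupport (fun t ↦ u (R - t)) ⊆ Ioi 0 :=
    tsupport_comp_const_sub_subset fun t ht ↦ (hs ht).2
  have hC := hardyMorreyConst_pos (zero_lt_one.trans hp)
  have hJ₁ := hardyDeficit_nonneg hp hu hus (half_pos hR).le
  have hJ₂ := hardyDeficit_nonneg hp hv hvs (half_pos hR).le
  have h_min : min x (R / 2) ≤ min y (R / 2) := min_le_min_right _ hxy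
  have h_max : max x (R / 2) ≤ max y (R / 2) := max_le_max_right _ hxy
  have h_len : min y (R / 2) - min x (R / 2) + (max y (R / 2) - max x (R / 2)) = y - x := by
    linarith [min_add_max x (R / 2), min_add_max y (R / 2)]
  have h_left := abs_sub_rpow_le_hardyMorreyConst_mul hp hu hus
    (lt_min hx (half_pos hR)) h_min (min_le_right y (R / 2))
  have h_right := abs_sub_rpow_le_hardyMorreyConst_mul (m := R / 2) hp hv hvs
    (sub_pos.2 (max_lt hyR (half_lt_self hR))) (sub_le_sub_left h_max R)
    (by linarith [le_max_right x (R / 2)])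
  simp only [sub_sub_cancel, sub_sub_sub_cancel_left] at h_right
  rw [abs_sub_comm] at h_right
  have h_modulus_left := logModulus_le_mul_logModulus_of_le hp (half_pos hR) (half_le_self hR.le)
    (sub_nonneg.2 h_min) (by linarith) (by linarith : y - x ≤ R)
  have h_modulus_right := logModulus_le_mul_logModulus_of_le hp (half_pos hR)
    (half_le_self hR.le) (sub_nonneg.2 h_max) (by linarith) (by linarith : y - x ≤ R)
  rw [hardyDeficit_min_eq_add (zero_lt_one.trans hp) hR.le hu hs]
  set C := hardyMorreyConst p
  set Ψ := logModulus p R (y - x)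
  set J₁ := hardyDeficit p id u 0 (R / 2)
  set J₂ := hardyDeficit p id (fun t ↦ u (R - t)) 0 (R / 2)
  calc |u x - u y| ^ p
      ≤ 2 ^ (p - 1) * (|u (min x (R / 2)) - u (min y (R / 2))| ^ p +
          |u (max x (R / 2)) - u (max y (R / 2))| ^ p) :=
        abs_sub_rpow_le_min_add_max hp.le u x y (R / 2)
    _ ≤ 2 ^ (p - 1) * (C * (p / (p - 1) * Ψ) * J₁ + C * (p / (p - 1) * Ψ) * J₂) := by
        gcongr
        · exact h_left.trans (by gcongr)
        · exact h_right.trans (by gcongr)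
    _ = 2 ^ (p - 1) * C * (p / (p - 1)) * Ψ * (J₁ + J₂) := by ring

lemma hardyDeficit_min_nonneg (hp : 1 < p) (hR : 0 ≤ R) (hu : ContDiff ℝ 1 u)
    (hs : tsupport u ⊆ Ioo 0 R) : 0 ≤ hardyDeficit p (fun t ↦ min t (R - t)) u 0 R := by
  rw [hardyDeficit_min_eq_add (zero_lt_one.trans hp) hR hu hs]
  exact add_nonneg (hardyDeficit_nonneg hp hu (fun t ht ↦ (hs ht).1) (by positivity))
    (hardyDeficit_nonneg hp (hu.comp (contDiff_const.sub contDiff_id))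
      (tsupport_comp_const_sub_subset fun t ht ↦ (hs ht).2) (by positivity))

lemma abs_sub_mul_inv_logWeight_rpow_le (hp : 1 < p) (hu : ContDiff ℝ 1 u)
    (hs : tsupport u ⊆ Ioo 0 R) (hx : 0 < x) (hxy : x ≤ y) (hyR : y < R) :
    |u x - u y| * (logWeight R (y - x))⁻¹ ^ (1 / p) ≤
      (2 ^ (p - 1) * hardyMorreyConst p * (p / (p - 1))) ^ (1 / p) * (y - x) ^ (1 - 1 / p) *
        hardyDeficit p (fun t ↦ min t (R - t)) u 0 R ^ (1 / p) := by
  have hC := hardyMorreyConst_pos (zero_lt_one.trans hp)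
  have h_len : 0 ≤ y - x := sub_nonneg.2 hxy
  exact mul_inv_rpow_le_of_rpow_le (by positivity) (abs_nonneg _) (by positivity)
    (hardyDeficit_min_nonneg hp (by linarith) hu hs)
    (zero_lt_one.trans_le (one_le_logWeight h_len (by linarith))) h_len
    (abs_sub_rpow_le_hardyDeficit_min hp hu hs hx hxy hyR)

lemma integral_sub_eq_hardyDeficit_min (hp : 0 < p) (hR : 0 ≤ R) (hu : ContDiff ℝ 1 u)
    (hs : tsupport u ⊆ Ioo 0 R) :
    (∫ t in Ioo 0 R, |deriv u t| ^ p) -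
        ((p - 1) / p) ^ p * ∫ t in Ioo 0 R, |u t| ^ p / min t (R - t) ^ p =
      hardyDeficit p (fun t ↦ min t (R - t)) u 0 R := by
  rw [hardyDeficit_eq_sub hp (by fun_prop) hu fun t ht ↦ lt_min (hs ht).1 (sub_pos.2 (hs ht).2)]
  simp only [intervalIntegral.integral_of_le hR, integral_Ioc_eq_integral_Ioo]

end Interval

theorem hardy_morrey_interval_general (p : ℝ) (hp : 1 < p) :
    ∃ c : ℝ, 0 < c ∧
      ∀ R : ℝ, 0 < R →
      ∀ u : ℝ → ℝ, ContDiff ℝ 1 u → tsupport u ⊆ Ioo 0 R →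
        ∀ x ∈ Ioo 0 R, ∀ y ∈ Ioo 0 R, x ≠ y →
          |u x - u y| * ((1 - Real.log (|x - y| / R))⁻¹) ^ (1 / p) ≤
            c * |x - y| ^ (1 - 1 / p) *
              ((∫ t in Ioo 0 R, |deriv u t| ^ p) -
                ((p - 1) / p) ^ p *
                  ∫ t in Ioo 0 R, |u t| ^ p / (min t (R - t)) ^ p) ^ (1 / p) := by
  have hC := hardyMorreyConst_pos (zero_lt_one.trans hp)
  refine ⟨(2 ^ (p - 1) * hardyMorreyConst p * (p / (p - 1))) ^ (1 / p), by positivity, ?_⟩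
  intro R hR u hu hs x hx y hy hxy
  rw [integral_sub_eq_hardyDeficit_min (zero_lt_one.trans hp) hR.le hu hs]
  wlog h_lt : x < y generalizing x y
  · rw [abs_sub_comm (u x), abs_sub_comm x]
    exact this y hy x hx hxy.symm (lt_of_le_of_ne (not_lt.1 h_lt) hxy.symm)
  rw [abs_sub_comm x y, abs_of_pos (sub_pos.2 h_lt)]
  exact abs_sub_mul_inv_logWeight_rpow_le hp hu hs hx.1 h_lt.le hy.2

/-- one-dimensional Hardy–Morrey inequality on an interval,
distance to the boundary. -/
theorem hardy_morrey_interval (p : ℝ) (hp : 1 < p) :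
    ∃ b c : ℝ, 1 ≤ b ∧ 0 < c ∧
      ∀ R : ℝ, 0 < R →
      ∀ u : ℝ → ℝ, ContDiff ℝ (⊤ : ℕ∞) u → HasCompactSupport u →
        tsupport u ⊆ Set.Ioo (0 : ℝ) R →
        ∀ x ∈ Set.Ioo (0 : ℝ) R, ∀ y ∈ Set.Ioo (0 : ℝ) R, x ≠ y →
          |u x - u y| * ((1 - Real.log (|x - y| / (b * R)))⁻¹) ^ (1 / p) ≤
            c * |x - y| ^ (1 - 1 / p) *
              ((∫ t in Set.Ioo (0 : ℝ) R, |deriv u t| ^ p)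
                - ((p - 1) / p) ^ p *
                    ∫ t in Set.Ioo (0 : ℝ) R, |u t| ^ p / (min t (R - t)) ^ p) ^ (1 / p) := by
  obtain ⟨c, hc, h⟩ := hardy_morrey_interval_general p hp
  refine ⟨1, c, le_rfl, hc, fun R hR u hu _ hs ↦ ?_⟩
  simpa only [one_mul] using h R hR u (hu.of_le (mod_cast le_top)) hs
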